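/- arXiv:math/0611567 — 3 statements merged into one kernel-verified Lean document; each statement's English description precedes it below -/
import Mathlib

section
/- For every α with 1 < α < 2 there exists a constant C₀ > 0 such that for all positive integers n one has Γ(n/α + 1)/n! ≤ C₀ / (n - ⌊n/α⌋ - 1)!, where for α > 1 and n ≥ 1 the integer n - ⌊n/α⌋ - 1 is nonnegative. -/
/-- For every α with 1 < α < 2 there exists C₀ > 0 such that for all positive integers n,
Γ(n/α + 1)/n! ≤ C₀ / (n - ⌊n/α⌋ - 1)!. -/
theorem gamma_div_factorial_le (α : ℝ) (hα₁ : 1 < α) (hα₂ : α < 2) :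
    ∃ C₀ : ℝ, 0 < C₀ ∧ ∀ n : ℕ, 1 ≤ n →
      Real.Gamma ((n : ℝ) / α + 1) / (Nat.factorial n)
        ≤ C₀ / (Nat.factorial (n - ⌊(n : ℝ) / α⌋₊ - 1)) := by
  refine ⟨1, one_pos, fun n hn => ?_⟩
  have hn' : (0 : ℝ) < n := by exact_mod_cast hn
  have hx : (0 : ℝ) ≤ (n : ℝ) / α := by positivity
  have hxn : (n : ℝ) / α < n := div_lt_self hn' hα₁
  have h1 := Nat.floor_le hx
  have h2 := Nat.lt_floor_add_one ((n : ℝ) / α)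
  have hmn : ⌊(n : ℝ) / α⌋₊ < n := (Nat.floor_lt hx).2 hxn
  generalize (n : ℝ) / α = x at *
  generalize ⌊x⌋₊ = m at *
  have hm0 : (0 : ℝ) ≤ m := Nat.cast_nonneg m
  have hG : Real.Gamma (x + 1) ≤ (Nat.factorial (m + 1) : ℝ) := by
    have h := Real.convexOn_Gamma.le_max_of_mem_Icc (x := (m : ℝ) + 1)
      (y := ((m + 1 : ℕ) : ℝ) + 1) (z := x + 1)
      (by simp only [Set.mem_Ioi]; positivity) (by simp only [Set.mem_Ioi]; positivity)
      ⟨by linarith, by push_cast; linarith⟩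
    rw [Real.Gamma_nat_eq_factorial, Real.Gamma_nat_eq_factorial] at h
    refine h.trans (max_le ?_ le_rfl)
    exact_mod_cast Nat.factorial_le (Nat.le_succ m)
  have hd : Nat.factorial (m + 1) * Nat.factorial (n - m - 1) ≤ Nat.factorial n := by
    have := Nat.factorial_mul_factorial_dvd_factorial (show m + 1 ≤ n from hmn)
    rw [← Nat.sub_sub] at this
    exact Nat.le_of_dvd (Nat.factorial_pos n) this
  have hd' : (Nat.factorial (m + 1) : ℝ) * Nat.factorial (n - m - 1) ≤ Nat.factorial n := by
    exact_mod_cast hd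
  rw [div_le_div_iff₀ (by positivity) (by positivity), one_mul]
  exact (mul_le_mul_of_nonneg_right hG (by positivity)).trans hd'
end

section
/- Let 1 < α < 2 and -1 ≤ β ≤ 1. For every real u, the series Σ_{n=1}^∞ (-1)^(n-1) · Γ(n/α + 1)/n! · sin(π n (1 - β(2-α)/α)/2) · u^(n-1) converges absolutely. -/
open Real in
/-- For 1 < α < 2, -1 ≤ β ≤ 1 and any real u, the series
Σ_{n=1}^∞ (-1)^(n-1) Γ(n/α+1)/n! · sin(π n (1 - β(2-α)/α)/2) · u^(n-1)
converges absolutely. -/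
theorem series_abs_convergent (α β u : ℝ) (hα₁ : 1 < α) (hα₂ : α < 2)
    (hβ₁ : -1 ≤ β) (hβ₂ : β ≤ 1) :
    Summable (fun n : ℕ =>
      |(-1 : ℝ) ^ n * (Real.Gamma (((n : ℝ) + 1) / α + 1) / (Nat.factorial (n + 1)))
        * Real.sin (π * ((n : ℝ) + 1) * (1 - β * (2 - α) / α) / 2) * u ^ n|) := by
  have h0 : 0 < α := by linarith
  have ha : 0 < 1 / α := by positivity
  have hb : 0 < 1 - 1 / α := by
    have : 1 / α < 1 := by rw [div_lt_one h0]; exact hα₁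
    linarith
  set b := 1 - 1 / α with hbdef
  have hG : ∀ n : ℕ, Real.Gamma (((n : ℝ) + 1) / α + 1) / (Nat.factorial (n + 1))
      ≤ ((Nat.factorial (n + 1) : ℕ) : ℝ) ^ (-b) := by
    intro n
    have hf : (0 : ℝ) < (Nat.factorial (n + 1) : ℕ) := by positivity
    have h := Real.Gamma_mul_add_mul_le_rpow_Gamma_mul_rpow_Gamma
      (s := ((n + 1 : ℕ) : ℝ) + 1) (t := 1) (a := 1 / α) (b := b)
      (by positivity) one_pos ha hb (by rw [hbdef]; ring)
    rw [Real.Gamma_nat_eq_factorial, Real.Gamma_one, Real.one_rpow, mul_one, mul_one] at h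
    have e : 1 / α * (((n + 1 : ℕ) : ℝ) + 1) + b = ((n : ℝ) + 1) / α + 1 := by
      rw [hbdef]; push_cast; ring
    rw [e] at h
    rw [div_le_iff₀ hf]
    refine h.trans (le_of_eq ?_)
    have e2 : 1 / α = -b + 1 := by rw [hbdef]; ring
    rw [e2, Real.rpow_add hf, Real.rpow_one]
  have hS : Summable (fun n : ℕ => ((Nat.factorial (n + 1) : ℕ) : ℝ) ^ (-b) * |u| ^ n) := by
    refine summable_of_ratio_norm_eventually_le (r := 1 / 2) (by norm_num) ?_
    have ht : Filter.Tendsto (fun n : ℕ => ((n + 2 : ℕ) : ℝ) ^ (-b) * |u|) Filter.atTop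
        (nhds (0 * |u|)) := by
      refine Filter.Tendsto.mul_const _ ?_
      exact (tendsto_rpow_neg_atTop hb).comp
        (tendsto_natCast_atTop_atTop.comp (Filter.tendsto_add_atTop_nat 2))
    rw [zero_mul] at ht
    filter_upwards [ht.eventually (ge_mem_nhds (show (0 : ℝ) < 1 / 2 by norm_num))] with n hn
    rw [Real.norm_of_nonneg (by positivity), Real.norm_of_nonneg (by positivity),
      Nat.factorial_succ (n + 1), Nat.cast_mul, Real.mul_rpow (by positivity) (by positivity),
      pow_succ]
    calc _ = (((n + 2 : ℕ) : ℝ) ^ (-b) * |u|) *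
          (((Nat.factorial (n + 1) : ℕ) : ℝ) ^ (-b) * |u| ^ n) := by ring
      _ ≤ _ := by gcongr
  refine Summable.of_nonneg_of_le (fun n => abs_nonneg _) (fun n => ?_) hS
  have hp : 0 ≤ Real.Gamma (((n : ℝ) + 1) / α + 1) / (Nat.factorial (n + 1)) :=
    div_nonneg (Real.Gamma_pos_of_pos (by positivity)).le (by positivity)
  rw [abs_mul, abs_mul, abs_mul, abs_pow, abs_neg, abs_one, one_pow, one_mul, abs_of_nonneg hp,
    abs_pow]
  refine mul_le_mul_of_nonneg_right ?_ (by positivity)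
  exact (mul_le_of_le_one_right hp (Real.abs_sin_le_one _)).trans (hG n)
end

section
/- Let 0 < α < 1 and -1 ≤ β ≤ 1. For every real u > 0, the series Σ_{n=1}^∞ (-1)^(n-1) · Γ(nα + 1)/n! · sin(π n (1 + β)/(2α)) · u^(-nα - 1) converges absolutely. -/
open Real in
/-- Γ(Nα+1) is at most (N!)^α. -/
theorem gamma_bound_aux (α : ℝ) (hα₁ : 0 < α) (hα₂ : α < 1) (N : ℕ) :
    Real.Gamma ((N : ℝ) * α + 1) ≤ ((Nat.factorial N : ℕ) : ℝ) ^ α := by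
  have h := Real.Gamma_mul_add_mul_le_rpow_Gamma_mul_rpow_Gamma (s := (N : ℝ) + 1) (t := 1)
    (a := α) (b := 1 - α) (by positivity) one_pos hα₁ (by linarith) (by ring)
  rw [Real.Gamma_one, Real.one_rpow, mul_one, mul_one, Real.Gamma_nat_eq_factorial] at h
  convert h using 2
  ring

open Real Filter Topology in
theorem summable_aux (α C : ℝ) (hα₂ : α < 1) (hC : 0 < C) :
    Summable (fun n : ℕ => C ^ n * ((Nat.factorial n : ℕ) : ℝ) ^ (α - 1)) := by
  have hpos : ∀ n : ℕ, 0 < C ^ n * ((Nat.factorial n : ℕ) : ℝ) ^ (α - 1) := fun n => by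
    have : (0 : ℝ) < (Nat.factorial n : ℕ) := by exact_mod_cast Nat.factorial_pos n
    positivity
  refine summable_of_ratio_test_tendsto_lt_one (l := 0) one_pos
    (Eventually.of_forall fun n => (hpos n).ne') ?_
  have h1 : Tendsto (fun n : ℕ => C * ((n + 1 : ℕ) : ℝ) ^ (-(1 - α))) atTop (𝓝 (C * 0)) :=
    (((tendsto_rpow_neg_atTop (by linarith : 0 < 1 - α)).comp
      (tendsto_natCast_atTop_atTop.comp (tendsto_add_atTop_nat 1)))).const_mul C
  rw [mul_zero] at h1
  refine h1.congr fun n => ?_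
  rw [Real.norm_of_nonneg (hpos _).le, Real.norm_of_nonneg (hpos _).le, eq_div_iff (hpos n).ne',
    Nat.factorial_succ, Nat.cast_mul, Real.mul_rpow (by positivity) (by positivity), pow_succ,
    neg_sub]
  ring


open Real in
/-- For 0 < α < 1, -1 ≤ β ≤ 1 and real u > 0, the series
Σ_{n=1}^∞ (-1)^(n-1) Γ(nα+1)/n! · sin(π n (1+β)/(2α)) · u^(-nα-1)
converges absolutely. -/
theorem series_abs_convergent_small_alpha (α β u : ℝ) (hα₁ : 0 < α) (hα₂ : α < 1)
    (hβ₁ : -1 ≤ β) (hβ₂ : β ≤ 1) (hu : 0 < u) :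
    Summable (fun n : ℕ =>
      |(-1 : ℝ) ^ n * (Real.Gamma (((n : ℝ) + 1) * α + 1) / (Nat.factorial (n + 1)))
        * Real.sin (π * ((n : ℝ) + 1) * (1 + β) / (2 * α))
        * u ^ (-(((n : ℝ) + 1) * α) - 1)|) := by

  have hs := ((summable_nat_add_iff 1).2
    (summable_aux α (u ^ (-α)) hα₂ (by positivity))).mul_left (u ^ (-1 : ℝ))
  refine Summable.of_nonneg_of_le (fun _ => abs_nonneg _) (fun n => ?_) hs
  have hg := gamma_bound_aux α hα₁ hα₂ (n + 1)
  push_cast at hg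
  have hf : (0 : ℝ) < (Nat.factorial (n + 1) : ℕ) := by exact_mod_cast Nat.factorial_pos _
  have hG : 0 < Real.Gamma (((n : ℝ) + 1) * α + 1) := Real.Gamma_pos_of_pos (by positivity)
  have hU : u ^ (-(((n : ℝ) + 1) * α) - 1) = u ^ (-1 : ℝ) * (u ^ (-α)) ^ (n + 1) := by
    rw [← Real.rpow_natCast, ← Real.rpow_mul hu.le, ← Real.rpow_add hu]
    congr 1
    push_cast
    ring
  have hpu : 0 < u ^ (-(((n : ℝ) + 1) * α) - 1) := by positivity
  rw [abs_mul, abs_mul, abs_mul, abs_pow, abs_neg, abs_one, one_pow, one_mul,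
    abs_of_pos (div_pos hG hf), abs_of_pos hpu]
  calc _ ≤ Real.Gamma (((n : ℝ) + 1) * α + 1) / (Nat.factorial (n + 1)) * 1
        * u ^ (-(((n : ℝ) + 1) * α) - 1) := by
        gcongr
        exact Real.abs_sin_le_one _
    _ ≤ ((Nat.factorial (n + 1) : ℕ) : ℝ) ^ α / (Nat.factorial (n + 1)) * 1
        * u ^ (-(((n : ℝ) + 1) * α) - 1) := by
        gcongr
    _ = _ := by
        rw [hU, Real.rpow_sub_one hf.ne']
        ring
end
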